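/- Let u be a pair potential that is stable with constant B ≥ 0 and regular, let Λ ⊂ ℝ^d be bounded and measurable, and assume Ξ_Λ(z) ≠ 0 for all |z| < z₀. Let z ∈ ℂ with |z| < z₀, let k ≥ 0 and y_1,…,y_k ∈ Λ with θ_Λ^{(k)}(z; y_1,…,y_k) ≠ 0 (θ_Λ^{(0)} := 1). Then for all n ≥ 1 and x_1,…,x_n ∈ Λ the quotients satisfy the Kirkwood–Salsburg-type recursion: θ_Λ^{(n+k)}(z; x_1,…,x_n, y_1,…,y_k) / θ_Λ^{(k)}(z; y_1,…,y_k) = z e^{−β W({x_1} | {x_2,…,x_n} ∪ {y_1,…,y_k})} Σ_{l=0}^∞ (1/l!) ∫_{Λ^l} Π_{i=1}^l f_β(x_1 − w_i) · [ θ_Λ^{(n+k+l−1)}(z; x_2,…,x_n, y_1,…,y_k, w_1,…,w_l) / θ_Λ^{(k)}(z; y_1,…,y_k) ] dw_1⋯dw_l, the series converging absolutely. -/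

import Mathlib

open MeasureTheory Bornology

noncomputable section

/-- Boltzmann factor `e^{-β t}` with the convention `e^{-β(+∞)} = 0`. -/
def boltz (β : ℝ) (t : EReal) : ℝ :=
  if t = ⊤ then 0 else Real.exp (-β * t.toReal)

/-- Hamiltonian of a pair potential: `H(x₁,…,xₙ) = ∑_{i<j} u(xᵢ - xⱼ)`. -/
def Ham {d : ℕ} (u : (Fin d → ℝ) → EReal) (n : ℕ) (x : Fin n → (Fin d → ℝ)) : EReal :=
  ∑ p ∈ Finset.univ.filter (fun p : Fin n × Fin n => p.1 < p.2), u (x p.1 - x p.2)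

/-- A pair potential: even, measurable, bounded from below. -/
def IsPairPotential {d : ℕ} (u : (Fin d → ℝ) → EReal) : Prop :=
  Measurable u ∧ (∀ x, u (-x) = u x) ∧ ∃ m : ℝ, ∀ x, (m : EReal) ≤ u x

/-- Stability with constant `B`: `H(x₁,…,xₙ) ≥ -Bn`. -/
def IsStable {d : ℕ} (u : (Fin d → ℝ) → EReal) (B : ℝ) : Prop :=
  ∀ (n : ℕ) (x : Fin n → (Fin d → ℝ)), ((-(B * n) : ℝ) : EReal) ≤ Ham u n x

/-- Mayer function `f_β = e^{-βu} - 1`. -/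
def mayer {d : ℕ} (β : ℝ) (u : (Fin d → ℝ) → EReal) (x : Fin d → ℝ) : ℝ :=
  boltz β (u x) - 1

/-- Regularity: the Mayer function is integrable. -/
def IsRegularPP {d : ℕ} (β : ℝ) (u : (Fin d → ℝ) → EReal) : Prop :=
  Integrable (mayer β u)

/-- `C_β(u) = ∫ |e^{-βu} - 1|`. -/
def Creg {d : ℕ} (β : ℝ) (u : (Fin d → ℝ) → EReal) : ℝ :=
  ∫ x, |mayer β u x|

/-- The cartesian power `Λ^k`. -/
def cube {d : ℕ} (Λ : Set (Fin d → ℝ)) (k : ℕ) : Set (Fin k → (Fin d → ℝ)) :=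
  Set.univ.pi fun _ => Λ

/-- Grand canonical partition function `Ξ_Λ(z)`. -/
def Xi {d : ℕ} (β : ℝ) (u : (Fin d → ℝ) → EReal) (Λ : Set (Fin d → ℝ)) (z : ℂ) : ℂ :=
  ∑' k : ℕ, z ^ k / (Nat.factorial k : ℂ) *
    ((∫ y in cube Λ k, boltz β (Ham u k y) : ℝ) : ℂ)

/-- `θ_Λ^{(n)}(z; x₁,…,xₙ)`. -/
def theta {d : ℕ} (β : ℝ) (u : (Fin d → ℝ) → EReal) (Λ : Set (Fin d → ℝ)) (n : ℕ)
    (z : ℂ) (x : Fin n → (Fin d → ℝ)) : ℂ :=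
  (Xi β u Λ z)⁻¹ * ∑' k : ℕ, z ^ (n + k) / (Nat.factorial k : ℂ) *
    ((∫ y in cube Λ k, boltz β (Ham u (n + k) (Fin.append x y)) : ℝ) : ℂ)

end

/-!
Singling out the point `x₁` factorises the Boltzmann weight of a configuration `x₁, x₂, …, xₙ, v` as
`e^{-βW(x₁ | x₂, …, xₙ)} ∏ᵢ (1 + f_β(x₁ - vᵢ)) e^{-βH(x₂, …, xₙ, v)}`. Expanding the product over
the subsets `S` of the points `v` and integrating, only the cardinality `l` of `S` matters, by
symmetry. The binomial coefficient counting the sets `S` turns `1/j!` into `1/(l! r!)` with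
`l + r = j`, so the `j`-th term of the series for `θ^{(n)}` is the `j`-th antidiagonal sum of a
double series. Stability bounds the weights of `n` points by `e^{βBn}`, and as `Λ` has finite volume
the double series converges absolutely for every `z`. Its row sums are the terms of the
Kirkwood–Salsburg series.
-/

section InfiniteSum

lemma tsum_sum_antidiagonal {A α : Type*} [AddMonoid A] [Finset.HasAntidiagonal A]
    [AddCommGroup α] [UniformSpace α] [IsUniformAddGroup α] [CompleteSpace α] [T2Space α]
    {f : A × A → α} (hf : Summable f) :
    ∑' n, ∑ p ∈ Finset.HasAntidiagonal.antidiagonal n, f p = ∑' p, f p := by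
  let e := Finset.HasAntidiagonal.sigmaAntidiagonalEquivProd (A := A)
  calc ∑' n, ∑ p ∈ Finset.HasAntidiagonal.antidiagonal n, f p
      = ∑' n, ∑' p : Finset.HasAntidiagonal.antidiagonal n, f (e ⟨n, p⟩) :=
        tsum_congr fun n => (Finset.tsum_subtype _ f).symm
    _ = ∑' c, f (e c) := (e.summable_iff.2 hf).tsum_sigma.symm
    _ = ∑' p, f p := e.tsum_eq f

end InfiniteSum

section Integration

variable {E : Type*} [MeasurableSpace E]

lemma measurable_sumElim {Ω α β : Type*} [MeasurableSpace Ω] {f : Ω → α → E} {g : Ω → β → E}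
    (hf : Measurable f) (hg : Measurable g) : Measurable fun ω => Sum.elim (f ω) (g ω) := by
  refine measurable_pi_lambda _ ?_
  rintro (a | b)
  · exact (measurable_pi_apply a).comp hf
  · exact (measurable_pi_apply b).comp hg

lemma integral_pi_eq_integral_sumElim {G : Type*} [NormedAddCommGroup G] [NormedSpace ℝ G]
    {α β γ : Type*} [Fintype α] [Fintype β] [Fintype γ] (μ : Measure E) [SigmaFinite μ]
    (e : α ⊕ β ≃ γ) (F : (γ → E) → G) :
    ∫ v, F v ∂(Measure.pi fun _ => μ) =
      ∫ q : (α → E) × (β → E), F (Sum.elim q.1 q.2 ∘ e.symm)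
        ∂((Measure.pi fun _ => μ).prod (Measure.pi fun _ => μ)) := by
  have relabel := measurePreserving_piCongrLeft (fun _ : γ => μ) e
  have split := measurePreserving_sumPiEquivProdPi_symm (fun _ : α ⊕ β => μ)
  rw [← relabel.integral_comp', ← split.integral_comp']
  refine integral_congr_ae (.of_forall fun q => congrArg F (funext fun i => ?_))
  obtain ⟨s, rfl⟩ := e.surjective i
  rw [MeasurableEquiv.coe_piCongrLeft, Equiv.piCongrLeft_apply_apply]
  rcases s with s | s <;> simp [MeasurableEquiv.coe_sumPiEquivProdPi_symm]

lemma integrable_finset_prod_pi {κ : Type*} [Fintype κ] {μ : Measure E} [IsFiniteMeasure μ]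
    {h : E → ℝ} (hh : Integrable h μ) (S : Finset κ) :
    Integrable (fun v : κ → E => ∏ i ∈ S, h (v i)) (Measure.pi fun _ => μ) := by
  classical
  have factor (i : κ) : Integrable (fun b => if i ∈ S then h b else 1) μ := by
    split_ifs
    · exact hh
    · exact integrable_const 1
  simpa [Finset.prod_ite_mem] using Integrable.fintype_prod (μ := fun _ => μ) factor

end Integration

section PairProd

open Classical in
/-- The product of a pair weight over all unordered pairs of distinct indices of a finite
configuration `x`. Taking the weight on `Sym2 E` builds in its symmetry, so that configurations may
be indexed by any finite type and no order on the indices is needed. -/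
noncomputable def pairProd {E M ι : Type*} [CommMonoid M] [Fintype ι] (φ : Sym2 E → M)
    (x : ι → E) : M :=
  ∏ p : Sym2 ι with ¬ p.IsDiag, φ (p.map x)

variable {E M ι κ : Type*} [CommMonoid M] [Fintype ι] [Fintype κ] (φ : Sym2 E → M)

lemma pairProd_comp_equiv (e : ι ≃ κ) (x : κ → E) : pairProd φ (x ∘ e) = pairProd φ x := by
  classical
  refine Finset.prod_nbij' (Sym2.map e) (Sym2.map e.symm) ?_ ?_ ?_ ?_ ?_ <;>
    simp [Sym2.map_map, Sym2.isDiag_map, e.injective, e.symm.injective]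

lemma pairProd_sumElim_singleton (a : E) (x : ι → E) :
    pairProd φ (Sum.elim ![a] x) = (∏ i, φ s(a, x i)) * pairProd φ x := by
  classical
  have univ_eq : (Finset.univ : Finset (Fin 1 ⊕ ι)) =
      Finset.cons (Sum.inl 0) (Finset.univ.map .inr) (by simp) := by
    ext (i | i)
    · simp [Subsingleton.elim i 0]
    · simp
  unfold pairProd
  rw [Finset.prod_filter, Finset.prod_filter, ← Finset.sym2_univ, ← Finset.sym2_univ, univ_eq,
    Finset.sym2_cons, Finset.prod_disjUnion, Finset.prod_map, Finset.prod_cons, Finset.prod_map,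
    Finset.sym2_map, Finset.prod_map]
  simp [Sym2.isDiag_map Sum.inr_injective, Sym2.map_map]

lemma pairProd_eq_prod_lt [LinearOrder ι] (x : ι → E) :
    pairProd φ x = ∏ p : ι × ι with p.1 < p.2, φ s(x p.1, x p.2) := by
  classical
  have offDiag_lt : (Finset.univ.offDiag.filter fun p : ι × ι => p.1 < p.2) =
      Finset.univ.filter fun p => p.1 < p.2 := by
    ext p
    simpa using ne_of_lt
  have sorted := Finset.sum_sym2_filter_not_isDiag (M := Additive M) Finset.univ
    fun p : Sym2 ι => Additive.ofMul (φ (p.map x))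
  rw [offDiag_lt, Finset.sym2_univ, ← ofMul_prod, ← ofMul_prod] at sorted
  unfold pairProd
  convert! Additive.ofMul.injective sorted

lemma pairProd_nonneg {φ : Sym2 E → ℝ} (hφ : ∀ p, 0 ≤ φ p) (x : ι → E) : 0 ≤ pairProd φ x :=
  Finset.prod_nonneg fun _ _ => hφ _

lemma measurable_pairProd [MeasurableSpace E] {φ : Sym2 E → ℝ}
    (hφ : Measurable fun p : E × E => φ s(p.1, p.2)) :
    Measurable (pairProd φ : (ι → E) → ℝ) := by
  refine Finset.measurable_prod _ fun p _ => ?_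
  induction p with | _ i j
  exact hφ.comp (by fun_prop : Measurable fun x : ι → E => (x i, x j))

end PairProd

section StableWeight

/-- The pair weights for which the expansions below converge: measurable, nonnegative, and with
products over the pairs of `n` points growing at most like `K ^ n`. For the weight
`e^{-βu(a - b)}` the growth condition is stability, with `K = e^{βB}`. -/
structure IsStableWeight {E : Type*} [MeasurableSpace E] (φ : Sym2 E → ℝ) (K : ℝ) : Prop where
  measurable : Measurable fun p : E × E => φ s(p.1, p.2)
  nonneg : ∀ p, 0 ≤ φ p
  const_nonneg : 0 ≤ K
  pairProd_le : ∀ (n : ℕ) (x : Fin n → E), pairProd φ x ≤ K ^ n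

namespace IsStableWeight

variable {E ι : Type*} [MeasurableSpace E] [Fintype ι] {φ : Sym2 E → ℝ} {K : ℝ}

lemma pairProd_le_pow_card (hφ : IsStableWeight φ K) (x : ι → E) :
    pairProd φ x ≤ K ^ Fintype.card ι := by
  rw [← pairProd_comp_equiv φ (Fintype.equivFin ι).symm x]
  exact hφ.pairProd_le _ _

lemma norm_pairProd_le (hφ : IsStableWeight φ K) (x : ι → E) :
    ‖pairProd φ x‖ ≤ K ^ Fintype.card ι := by
  rw [Real.norm_of_nonneg (pairProd_nonneg hφ.nonneg x)]
  exact hφ.pairProd_le_pow_card x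

lemma apply_le (hφ : IsStableWeight φ K) (a b : E) : φ s(a, b) ≤ K ^ 2 := by
  have pair : pairProd φ ![a, b] = φ s(a, b) := by
    simp [pairProd_eq_prod_lt, Finset.prod_filter, Fintype.prod_prod_type, Fin.prod_univ_two]
  exact pair ▸ hφ.pairProd_le 2 ![a, b]

lemma integrable_sub_one (hφ : IsStableWeight φ K) (μ : Measure E) [IsFiniteMeasure μ] (a : E) :
    Integrable (fun b => φ s(a, b) - 1) μ := by
  have bounded : Integrable (fun b => φ s(a, b)) μ :=
    .of_bound (hφ.measurable.comp measurable_prodMk_left).aestronglyMeasurable (K ^ 2)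
      (.of_forall fun b => by
        rw [Real.norm_of_nonneg (hφ.nonneg _)]
        exact hφ.apply_le a b)
  exact bounded.sub (integrable_const 1)

lemma integrable_mul_pairProd (hφ : IsStableWeight φ K) {Ω : Type*} [MeasurableSpace Ω]
    {ν : Measure Ω} {g : Ω → ℝ} (hg : Integrable g ν) {x : Ω → ι → E} (hx : Measurable x) :
    Integrable (fun ω => g ω * pairProd φ (x ω)) ν :=
  hg.mul_bdd ((measurable_pairProd hφ.measurable).comp hx).aestronglyMeasurable
    (.of_forall fun ω => hφ.norm_pairProd_le (x ω))

end IsStableWeight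

end StableWeight

section Correlation

variable {E ι κ : Type*} [MeasurableSpace E] [Fintype ι] [Fintype κ]

/-- The total weight of the configurations extending `x` by `r` points, integrated over the
positions of the additional points. -/
noncomputable def marginal (φ : Sym2 E → ℝ) (μ : Measure E) (x : ι → E) (r : ℕ) : ℝ :=
  ∫ v : Fin r → E, pairProd φ (Sum.elim x v) ∂(Measure.pi fun _ => μ)

/-- The unnormalised correlation function `Ξ(z) θ^{(n)}(z; x₁, …, xₙ)` of the grand canonical
ensemble with pair weight `φ` and single-particle measure `μ`; here `n = card ι`. -/
noncomputable def correlation (φ : Sym2 E → ℝ) (μ : Measure E) (z : ℂ) (x : ι → E) : ℂ :=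
  ∑' r : ℕ, z ^ (Fintype.card ι + r) / (Nat.factorial r : ℂ) * (marginal φ μ x r : ℂ)

/-- The coefficients of the Kirkwood–Salsburg expansion: `l` of the additional points carry a
factor `h` (a Mayer function in the application), the other `r` points do not. -/
noncomputable def mayerIntegral (φ : Sym2 E → ℝ) (μ : Measure E) (h : E → ℝ) (x : ι → E)
    (l r : ℕ) : ℝ :=
  ∫ w : Fin l → E, (∏ i, h (w i)) * marginal φ μ (Sum.elim x w) r ∂(Measure.pi fun _ => μ)

lemma correlation_comp_equiv (φ : Sym2 E → ℝ) (μ : Measure E) (z : ℂ) (e : ι ≃ κ) (x : κ → E) :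
    correlation φ μ z (x ∘ e) = correlation φ μ z x := by
  have marginal_comp (r : ℕ) : marginal φ μ (x ∘ e) r = marginal φ μ x r := by
    unfold marginal
    congr 1 with v
    rw [← pairProd_comp_equiv φ (e.sumCongr (Equiv.refl (Fin r)))]
    congr 1 with s
    rcases s with s | s <;> rfl
  simp only [correlation, marginal_comp, Fintype.card_congr e]

section Integrals

variable {φ : Sym2 E → ℝ} {K : ℝ} {h : E → ℝ} {μ : Measure E} [IsFiniteMeasure μ]

lemma norm_marginal_le (hφ : IsStableWeight φ K) (x : ι → E) (r : ℕ) :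
    ‖marginal φ μ x r‖ ≤ K ^ (Fintype.card ι + r) * μ.real Set.univ ^ r := by
  have volume_pow : (Measure.pi fun _ : Fin r => μ).real Set.univ = μ.real Set.univ ^ r := by
    simp [measureReal_def, Measure.pi_univ]
  rw [← volume_pow]
  refine norm_integral_le_of_norm_le_const (.of_forall fun v => ?_)
  simpa using hφ.norm_pairProd_le (Sum.elim x v)

lemma integrable_prod_mul_pairProd (hφ : IsStableWeight φ K) (hh : Integrable h μ) (x : ι → E)
    (l r : ℕ) :
    Integrable (fun q : (Fin l → E) × (Fin r → E) =>
        (∏ i, h (q.1 i)) * pairProd φ (Sum.elim (Sum.elim x q.1) q.2))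
      ((Measure.pi fun _ => μ).prod (Measure.pi fun _ => μ)) :=
  hφ.integrable_mul_pairProd ((integrable_finset_prod_pi hh Finset.univ).comp_fst _)
    (measurable_sumElim (measurable_sumElim measurable_const measurable_fst) measurable_snd)

lemma integrable_prod_mul_marginal (hφ : IsStableWeight φ K) (hh : Integrable h μ) (x : ι → E)
    (l r : ℕ) :
    Integrable (fun w : Fin l → E => (∏ i, h (w i)) * marginal φ μ (Sum.elim x w) r)
      (Measure.pi fun _ => μ) := by
  simpa only [marginal, integral_const_mul] using
    (integrable_prod_mul_pairProd hφ hh x l r).integral_prod_left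

lemma mayerIntegral_eq_integral_prod (hφ : IsStableWeight φ K) (hh : Integrable h μ) (x : ι → E)
    (l r : ℕ) :
    mayerIntegral φ μ h x l r = ∫ q : (Fin l → E) × (Fin r → E),
      (∏ i, h (q.1 i)) * pairProd φ (Sum.elim (Sum.elim x q.1) q.2)
        ∂((Measure.pi fun _ => μ).prod (Measure.pi fun _ => μ)) := by
  rw [integral_prod _ (integrable_prod_mul_pairProd hφ hh x l r)]
  simp only [mayerIntegral, marginal, integral_const_mul]

lemma integral_norm_prod_mul_marginal_le (hφ : IsStableWeight φ K) (hh : Integrable h μ)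
    (x : ι → E) (l r : ℕ) :
    ∫ w : Fin l → E, ‖(∏ i, h (w i)) * marginal φ μ (Sum.elim x w) r‖ ∂(Measure.pi fun _ => μ) ≤
      (∫ b, ‖h b‖ ∂μ) ^ l * (K ^ (Fintype.card ι + l + r) * μ.real Set.univ ^ r) := by
  have integral_prod_norm : ∫ w : Fin l → E, ∏ i, ‖h (w i)‖ ∂(Measure.pi fun _ => μ) =
      (∫ b, ‖h b‖ ∂μ) ^ l := by
    simpa using integral_fintype_prod_eq_pow (ι := Fin l) (μ := μ) fun b => ‖h b‖
  rw [← integral_prod_norm, ← integral_mul_const]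
  refine integral_mono (integrable_prod_mul_marginal hφ hh x l r).norm
    ((integrable_finset_prod_pi hh.norm Finset.univ).mul_const _) fun w => ?_
  dsimp only
  rw [norm_mul, norm_prod]
  gcongr
  simpa using norm_marginal_le hφ (Sum.elim x w) r

-- The integrand is symmetric in the points of `S` and in those of its complement, so only the
-- cardinality of `S` matters.
lemma integral_prod_finset_mul_pairProd (hφ : IsStableWeight φ K) (hh : Integrable h μ)
    (x : ι → E) {j : ℕ} (S : Finset (Fin j)) :
    ∫ v, (∏ i ∈ S, h (v i)) * pairProd φ (Sum.elim x v) ∂(Measure.pi fun _ => μ) =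
      mayerIntegral φ μ h x S.card (j - S.card) := by
  have card_compl : Sᶜ.card = j - S.card := by simp [Finset.card_compl]
  let e := finSumEquivOfFinset (s := S) rfl card_compl
  rw [integral_pi_eq_integral_sumElim μ e, mayerIntegral_eq_integral_prod hφ hh]
  congr 1 with q
  congr 1
  · calc ∏ i ∈ S, h (Sum.elim q.1 q.2 (e.symm i))
        = ∏ i : S, h (Sum.elim q.1 q.2 (e.symm i)) := (Finset.prod_coe_sort S _).symm
      _ = ∏ i, h (Sum.elim q.1 q.2 (e.symm (e (Sum.inl i)))) :=
        ((S.orderIsoOfFin rfl).toEquiv.prod_comp _).symm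
      _ = ∏ i, h (q.1 i) := by simp
  · rw [← pairProd_comp_equiv φ ((Equiv.sumAssoc ι _ _).trans ((Equiv.refl ι).sumCongr e))]
    congr 1 with s
    rcases s with (s | s) | s <;> simp

lemma integral_prod_one_add_mul_pairProd (hφ : IsStableWeight φ K) (hh : Integrable h μ)
    (x : ι → E) (j : ℕ) :
    ∫ v : Fin j → E, (∏ i, (1 + h (v i))) * pairProd φ (Sum.elim x v) ∂(Measure.pi fun _ => μ) =
      ∑ p ∈ Finset.HasAntidiagonal.antidiagonal j,
        (j.choose p.1 : ℝ) * mayerIntegral φ μ h x p.1 p.2 := by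
  simp only [Finset.prod_one_add, Finset.sum_mul]
  rw [integral_finsetSum _ fun S _ => hφ.integrable_mul_pairProd (integrable_finset_prod_pi hh S)
    (measurable_sumElim measurable_const measurable_id')]
  simp only [integral_prod_finset_mul_pairProd hφ hh]
  rw [Finset.sum_powerset_apply_card (fun l => mayerIntegral φ μ h x l (j - l)),
    Finset.Nat.sum_antidiagonal_eq_sum_range_succ_mk]
  simp

end Integrals

section KirkwoodSalsburg

/-- The `(l, r)` term of the double series whose row sums are the terms of the Kirkwood–Salsburg
series and whose antidiagonal sums are the terms of a correlation function with one more point. -/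
noncomputable def mayerTerm (φ : Sym2 E → ℝ) (μ : Measure E) (h : E → ℝ) (z : ℂ) (x : ι → E)
    (p : ℕ × ℕ) : ℂ :=
  z ^ (Fintype.card ι + p.1 + p.2) / (p.1.factorial * p.2.factorial : ℂ) *
    (mayerIntegral φ μ h x p.1 p.2 : ℂ)

variable {φ : Sym2 E → ℝ} {K : ℝ} {h : E → ℝ} {μ : Measure E} [IsFiniteMeasure μ]

lemma summable_integral_norm_prod_mul_marginal (hφ : IsStableWeight φ K) (hh : Integrable h μ)
    (t : ℝ) (ht : 0 ≤ t) (x : ι → E) :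
    Summable fun p : ℕ × ℕ =>
      t ^ (Fintype.card ι + p.1 + p.2) / (p.1.factorial * p.2.factorial : ℝ) *
        ∫ w : Fin p.1 → E, ‖(∏ i, h (w i)) * marginal φ μ (Sum.elim x w) p.2‖
          ∂(Measure.pi fun _ => μ) := by
  set C := ∫ b, ‖h b‖ ∂μ
  set V := μ.real Set.univ
  have hK := hφ.const_nonneg
  have majorant := ((Real.summable_pow_div_factorial (t * K * C)).mul_of_nonneg
    (Real.summable_pow_div_factorial (t * K * V)) (fun _ => by positivity)
    (fun _ => by positivity)).mul_left (t ^ Fintype.card ι * K ^ Fintype.card ι)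
  refine majorant.of_nonneg_of_le (fun p => by positivity) fun p => ?_
  calc _ ≤ t ^ (Fintype.card ι + p.1 + p.2) / (p.1.factorial * p.2.factorial : ℝ) *
        (C ^ p.1 * (K ^ (Fintype.card ι + p.1 + p.2) * V ^ p.2)) := by
        gcongr
        exact integral_norm_prod_mul_marginal_le hφ hh x p.1 p.2
    _ = _ := by
        field_simp
        ring

lemma summable_norm_mayerTerm (hφ : IsStableWeight φ K) (hh : Integrable h μ) (z : ℂ)
    (x : ι → E) : Summable fun p => ‖mayerTerm φ μ h z x p‖ := by
  refine (summable_integral_norm_prod_mul_marginal hφ hh ‖z‖ (norm_nonneg z) x).of_nonneg_of_le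
    (fun _ => norm_nonneg _) fun p => ?_
  simp only [mayerTerm, norm_mul, norm_div, norm_pow, Complex.norm_natCast, Complex.norm_real]
  gcongr
  simpa only [norm_mul] using! norm_integral_le_integral_norm (μ := Measure.pi fun _ => μ)
    fun w : Fin p.1 → E => (∏ i, h (w i)) * marginal φ μ (Sum.elim x w) p.2

lemma tsum_mayerTerm_row (hφ : IsStableWeight φ K) (hh : Integrable h μ) (z : ℂ) (x : ι → E)
    (l : ℕ) :
    ∑' r, mayerTerm φ μ h z x (l, r) = (1 / (Nat.factorial l : ℂ)) *
      ∫ w : Fin l → E, (∏ i, (h (w i) : ℂ)) * correlation φ μ z (Sum.elim x w)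
        ∂(Measure.pi fun _ => μ) := by
  let F (r : ℕ) (w : Fin l → E) : ℂ := (z ^ (Fintype.card ι + l + r) / (Nat.factorial r : ℂ)) *
    (((∏ i, h (w i)) * marginal φ μ (Sum.elim x w) r : ℝ) : ℂ)
  have integrable_F (r : ℕ) : Integrable (F r) (Measure.pi fun _ => μ) :=
    (integrable_prod_mul_marginal hφ hh x l r).ofReal.const_mul _
  have summable_F : Summable fun r => ∫ w, ‖F r w‖ ∂(Measure.pi fun _ => μ) := by
    refine (((summable_integral_norm_prod_mul_marginal hφ hh ‖z‖ (norm_nonneg z)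
      x).prod_factor l).mul_left (l.factorial : ℝ)).congr fun r => ?_
    simp only [F, norm_mul (z ^ _ / _), Complex.norm_real, integral_const_mul, norm_div, norm_pow,
      Complex.norm_natCast]
    field_simp
  have tsum_F (w : Fin l → E) :
      ∑' r, F r w = (∏ i, (h (w i) : ℂ)) * correlation φ μ z (Sum.elim x w) := by
    rw [correlation, ← tsum_mul_left]
    refine tsum_congr fun r => ?_
    simp only [F, Complex.ofReal_mul, Complex.ofReal_prod, Fintype.card_sum, Fintype.card_fin]
    ring
  simp only [← tsum_F]
  rw [← integral_tsum_of_summable_integral_norm integrable_F summable_F, ← tsum_mul_left]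
  refine tsum_congr fun r => ?_
  simp only [F, integral_const_mul, integral_complex_ofReal, mayerTerm, mayerIntegral]
  field_simp

lemma sum_antidiagonal_mayerTerm (hφ : IsStableWeight φ K) (hh : Integrable h μ) (z : ℂ)
    (x : ι → E) (j : ℕ) :
    ∑ p ∈ Finset.HasAntidiagonal.antidiagonal j, mayerTerm φ μ h z x p =
      z ^ (Fintype.card ι + j) / (Nat.factorial j : ℂ) *
        ((∫ v : Fin j → E, (∏ i, (1 + h (v i))) * pairProd φ (Sum.elim x v)
          ∂(Measure.pi fun _ => μ) : ℝ) : ℂ) := by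
  rw [integral_prod_one_add_mul_pairProd hφ hh, Complex.ofReal_sum, Finset.mul_sum]
  refine Finset.sum_congr rfl fun ⟨l, r⟩ hp => ?_
  obtain rfl : l + r = j := Finset.HasAntidiagonal.mem_antidiagonal.1 hp
  have factorial_ne_zero : ((l + r).factorial : ℂ) ≠ 0 := mod_cast (l + r).factorial_ne_zero
  simp only [mayerTerm, Nat.cast_add_choose, ← add_assoc]
  push_cast
  field_simp

lemma marginal_sumElim_singleton (φ : Sym2 E → ℝ) (μ : Measure E) (a : E) (x : ι → E) (r : ℕ) :
    marginal φ μ (Sum.elim ![a] x) r = (∏ i, φ s(a, x i)) *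
      ∫ v : Fin r → E, (∏ i, (1 + (φ s(a, v i) - 1))) * pairProd φ (Sum.elim x v)
        ∂(Measure.pi fun _ => μ) := by
  rw [marginal, ← integral_const_mul]
  congr 1 with v
  have assoc : Sum.elim (Sum.elim ![a] x) v =
      Sum.elim ![a] (Sum.elim x v) ∘ Equiv.sumAssoc (Fin 1) ι (Fin r) := by
    ext ((s | s) | s) <;> rfl
  rw [assoc, pairProd_comp_equiv, pairProd_sumElim_singleton, Fintype.prod_sum_type]
  simp only [Sum.elim_inl, Sum.elim_inr, add_sub_cancel, mul_assoc]

lemma summable_norm_integral_mul_correlation (hφ : IsStableWeight φ K) (hh : Integrable h μ)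
    (z : ℂ) (x : ι → E) :
    Summable fun l : ℕ => ‖(1 / (Nat.factorial l : ℂ)) *
      ∫ w : Fin l → E, (∏ i, (h (w i) : ℂ)) * correlation φ μ z (Sum.elim x w)
        ∂(Measure.pi fun _ => μ)‖ := by
  have summable_norm := summable_norm_mayerTerm hφ hh z x
  simp only [← tsum_mayerTerm_row hφ hh]
  exact summable_norm.prod.of_nonneg_of_le (fun _ => norm_nonneg _)
    fun l => norm_tsum_le_tsum_norm (summable_norm.prod_factor l)

theorem correlation_sumElim_singleton (hφ : IsStableWeight φ K) (z : ℂ) (a : E) (x : ι → E) :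
    correlation φ μ z (Sum.elim ![a] x) = z * ((∏ i, φ s(a, x i) : ℝ) : ℂ) *
      ∑' l : ℕ, (1 / (Nat.factorial l : ℂ)) *
        ∫ w : Fin l → E, (∏ i, ((φ s(a, w i) - 1 : ℝ) : ℂ)) * correlation φ μ z (Sum.elim x w)
          ∂(Measure.pi fun _ => μ) := by
  have hh := hφ.integrable_sub_one μ a
  have summable_term := (summable_norm_mayerTerm hφ hh z x).of_norm
  simp only [← tsum_mayerTerm_row hφ hh]
  rw [← summable_term.tsum_prod, ← tsum_sum_antidiagonal summable_term, ← tsum_mul_left,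
    correlation]
  refine tsum_congr fun j => ?_
  rw [sum_antidiagonal_mayerTerm hφ hh, marginal_sumElim_singleton, Fintype.card_sum,
    Fintype.card_fin]
  push_cast
  ring

end KirkwoodSalsburg

end Correlation

section PairPotential

lemma boltz_nonneg (β : ℝ) (t : EReal) : 0 ≤ boltz β t := by
  unfold boltz
  split_ifs
  · exact le_rfl
  · exact (Real.exp_pos _).le

lemma measurable_boltz (β : ℝ) : Measurable (boltz β) :=
  .ite (measurableSet_singleton _) measurable_const (measurable_ereal_toReal.const_mul _).exp

lemma boltz_add (β : ℝ) {s t : EReal} (hs : s ≠ ⊥) (ht : t ≠ ⊥) :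
    boltz β (s + t) = boltz β s * boltz β t := by
  by_cases hs' : s = ⊤
  · simp [boltz, hs', EReal.top_add_of_ne_bot ht]
  by_cases ht' : t = ⊤
  · simp [boltz, ht', EReal.add_top_of_ne_bot hs]
  rw [boltz, boltz, boltz, if_neg hs', if_neg ht', if_neg (EReal.add_ne_top hs' ht'),
    EReal.toReal_add hs' hs ht' ht, mul_add, Real.exp_add]

lemma sum_ne_bot {ι : Type*} (s : Finset ι) {f : ι → EReal} (hf : ∀ i, f i ≠ ⊥) :
    ∑ i ∈ s, f i ≠ ⊥ :=
  Finset.sum_induction f (· ≠ ⊥) (fun _ _ ha hb => by simp [EReal.add_eq_bot_iff, ha, hb])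
    EReal.zero_ne_bot fun i _ => hf i

lemma boltz_sum (β : ℝ) {ι : Type*} (s : Finset ι) {f : ι → EReal} (hf : ∀ i, f i ≠ ⊥) :
    boltz β (∑ i ∈ s, f i) = ∏ i ∈ s, boltz β (f i) := by
  classical
  induction s using Finset.induction_on with
  | empty => simp [boltz]
  | insert a s ha ih =>
    rw [Finset.sum_insert ha, Finset.prod_insert ha, boltz_add β (hf a) (sum_ne_bot s hf), ih]

lemma boltz_le_exp {β : ℝ} (hβ : 0 ≤ β) {c : ℝ} {t : EReal} (h : (c : EReal) ≤ t) :
    boltz β t ≤ Real.exp (-β * c) := by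
  unfold boltz
  split_ifs with ht
  · exact (Real.exp_pos _).le
  · have le_toReal : c ≤ t.toReal := by
      simpa using EReal.toReal_le_toReal h (EReal.coe_ne_bot c) ht
    exact Real.exp_le_exp.2 (mul_le_mul_of_nonpos_left le_toReal (neg_nonpos.2 hβ))

variable {d : ℕ} {u : (Fin d → ℝ) → EReal}

lemma IsPairPotential.ne_bot (hu : IsPairPotential u) (a : Fin d → ℝ) : u a ≠ ⊥ := by
  obtain ⟨-, -, c, hc⟩ := hu
  exact ((EReal.bot_lt_coe c).trans_le (hc a)).ne'

/-- The pair weight `e^{-βu(a - b)}` of a pair potential, a function of the unordered pair `{a, b}`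
because `u` is even. -/
noncomputable def boltzPair (β : ℝ) (hu : IsPairPotential u) : Sym2 (Fin d → ℝ) → ℝ :=
  Sym2.lift ⟨fun a b => boltz β (u (a - b)), fun a b => congrArg (boltz β) (by
    rw [← neg_sub, hu.2.1])⟩

lemma boltz_Ham (β : ℝ) (hu : IsPairPotential u) (n : ℕ) (x : Fin n → Fin d → ℝ) :
    boltz β (Ham u n x) = pairProd (boltzPair β hu) x := by
  rw [pairProd_eq_prod_lt, Ham, boltz_sum β _ fun _ => hu.ne_bot _]
  rfl

lemma isStableWeight_boltzPair {β B : ℝ} (hβ : 0 ≤ β) (hu : IsPairPotential u)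
    (hstab : IsStable u B) : IsStableWeight (boltzPair β hu) (Real.exp (β * B)) where
  measurable := (measurable_boltz β).comp (hu.1.comp (measurable_fst.sub measurable_snd))
  nonneg p := by
    induction p with | _ a b
    exact boltz_nonneg β _
  const_nonneg := (Real.exp_pos _).le
  pairProd_le n x :=
    calc pairProd (boltzPair β hu) x
        = boltz β (Ham u n x) := (boltz_Ham β hu n x).symm
      _ ≤ Real.exp (-β * -(B * n)) := boltz_le_exp hβ (hstab n x)
      _ = Real.exp (β * B) ^ n := by
        rw [← Real.exp_nat_mul]
        ring_nf

lemma restrict_cube (Λ : Set (Fin d → ℝ)) (k : ℕ) :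
    (volume : Measure (Fin k → Fin d → ℝ)).restrict (cube Λ k) =
      Measure.pi fun _ => volume.restrict Λ :=
  Measure.restrict_pi_pi _ _

lemma append_comp_finSumFinEquiv {E : Type*} {n l : ℕ} (x : Fin n → E) (w : Fin l → E) :
    Fin.append x w ∘ finSumFinEquiv = Sum.elim x w := by
  funext s
  rcases s with s | s <;> simp

lemma theta_eq_correlation (β : ℝ) (hu : IsPairPotential u) (Λ : Set (Fin d → ℝ)) (n : ℕ) (z : ℂ)
    (x : Fin n → Fin d → ℝ) :
    theta β u Λ n z x =
      (Xi β u Λ z)⁻¹ * correlation (boltzPair β hu) (volume.restrict Λ) z x := by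
  have append_eq (r : ℕ) (v : Fin r → Fin d → ℝ) :
      pairProd (boltzPair β hu) (Fin.append x v) = pairProd (boltzPair β hu) (Sum.elim x v) := by
    rw [← pairProd_comp_equiv _ finSumFinEquiv, append_comp_finSumFinEquiv]
  simp only [theta, correlation, marginal, restrict_cube, boltz_Ham β hu, append_eq,
    Fintype.card_fin]

lemma theta_cons_eq_correlation (β : ℝ) (hu : IsPairPotential u) (Λ : Set (Fin d → ℝ)) (n : ℕ)
    (z : ℂ) (a : Fin d → ℝ) (x : Fin n → Fin d → ℝ) :
    theta β u Λ (n + 1) z (Fin.cons a x) =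
      (Xi β u Λ z)⁻¹ * correlation (boltzPair β hu) (volume.restrict Λ) z (Sum.elim ![a] x) := by
  let e : Fin 1 ⊕ Fin n ≃ Fin (n + 1) := finSumFinEquiv.trans (finCongr (add_comm 1 n))
  have cons_comp : (Fin.cons a x : Fin (n + 1) → Fin d → ℝ) ∘ e = Sum.elim ![a] x := by
    funext s
    rcases s with s | s
    · obtain rfl := Subsingleton.elim s 0
      rfl
    · simp [e]
  rw [theta_eq_correlation β hu, ← correlation_comp_equiv _ _ z e, cons_comp]

lemma theta_append_eq_correlation (β : ℝ) (hu : IsPairPotential u) (Λ : Set (Fin d → ℝ)) (n l : ℕ)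
    (z : ℂ) (x : Fin n → Fin d → ℝ) (w : Fin l → Fin d → ℝ) :
    theta β u Λ (n + l) z (Fin.append x w) =
      (Xi β u Λ z)⁻¹ * correlation (boltzPair β hu) (volume.restrict Λ) z (Sum.elim x w) := by
  rw [theta_eq_correlation β hu, ← correlation_comp_equiv _ _ z finSumFinEquiv,
    append_comp_finSumFinEquiv]

lemma integral_prod_mayer_mul_theta (β : ℝ) (hu : IsPairPotential u) (Λ : Set (Fin d → ℝ))
    (n l : ℕ) (z : ℂ) (a : Fin d → ℝ) (x : Fin n → Fin d → ℝ) :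
    ∫ w in cube Λ l, (∏ i, (mayer β u (a - w i) : ℂ)) * theta β u Λ (n + l) z (Fin.append x w) =
      (Xi β u Λ z)⁻¹ * ∫ w : Fin l → Fin d → ℝ,
        (∏ i, ((boltzPair β hu s(a, w i) - 1 : ℝ) : ℂ)) *
          correlation (boltzPair β hu) (volume.restrict Λ) z (Sum.elim x w)
        ∂(Measure.pi fun _ => volume.restrict Λ) := by
  simp only [theta_append_eq_correlation β hu, restrict_cube, mul_left_comm _ (Xi β u Λ z)⁻¹,
    integral_const_mul]
  rfl

lemma summable_norm_integral_mul_theta {β B : ℝ} (hβ : 0 ≤ β) (hu : IsPairPotential u)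
    (hstab : IsStable u B) {Λ : Set (Fin d → ℝ)} (hΛ : volume Λ ≠ ⊤) {n : ℕ} (z : ℂ)
    (a : Fin d → ℝ) (x : Fin n → Fin d → ℝ) :
    Summable fun l : ℕ => ‖(1 / (Nat.factorial l : ℂ)) * ∫ w in cube Λ l,
      (∏ i, (mayer β u (a - w i) : ℂ)) * theta β u Λ (n + l) z (Fin.append x w)‖ := by
  have : IsFiniteMeasure (volume.restrict Λ) := isFiniteMeasure_restrict.2 hΛ
  have hφ := isStableWeight_boltzPair hβ hu hstab
  simp only [integral_prod_mayer_mul_theta β hu, mul_left_comm _ (Xi β u Λ z)⁻¹,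
    norm_mul (Xi β u Λ z)⁻¹]
  exact (summable_norm_integral_mul_correlation hφ (hφ.integrable_sub_one _ a) z x).mul_left _

theorem theta_cons {β B : ℝ} (hβ : 0 ≤ β) (hu : IsPairPotential u) (hstab : IsStable u B)
    {Λ : Set (Fin d → ℝ)} (hΛ : volume Λ ≠ ⊤) {n : ℕ} (z : ℂ) (a : Fin d → ℝ)
    (x : Fin n → Fin d → ℝ) :
    theta β u Λ (n + 1) z (Fin.cons a x) = z * (boltz β (∑ i, u (a - x i)) : ℂ) *
      ∑' l : ℕ, (1 / (Nat.factorial l : ℂ)) * ∫ w in cube Λ l,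
        (∏ i, (mayer β u (a - w i) : ℂ)) * theta β u Λ (n + l) z (Fin.append x w) := by
  have : IsFiniteMeasure (volume.restrict Λ) := isFiniteMeasure_restrict.2 hΛ
  have weight_eq : boltz β (∑ i, u (a - x i)) = ∏ i, boltzPair β hu s(a, x i) :=
    boltz_sum β _ fun _ => hu.ne_bot _
  simp only [integral_prod_mayer_mul_theta β hu, mul_left_comm _ (Xi β u Λ z)⁻¹, tsum_mul_left]
  rw [theta_cons_eq_correlation β hu,
    correlation_sumElim_singleton (isStableWeight_boltzPair hβ hu hstab), weight_eq]

lemma theta_append_succ (β : ℝ) (u : (Fin d → ℝ) → EReal) (Λ : Set (Fin d → ℝ)) (z : ℂ) {m k : ℕ}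
    (x : Fin (m + 1) → Fin d → ℝ) (y : Fin k → Fin d → ℝ) :
    theta β u Λ (m + 1 + k) z (Fin.append x y) =
      theta β u Λ (m + k + 1) z (Fin.cons (x 0) (Fin.append (Fin.tail x) y)) := by
  have theta_comp_cast {n n' : ℕ} (h : n = n') (v : Fin n' → Fin d → ℝ) :
      theta β u Λ n z (v ∘ Fin.cast h) = theta β u Λ n' z v := by
    subst h
    rfl
  rw [← Fin.cons_self_tail x, Fin.append_cons, theta_comp_cast, Fin.cons_zero, Fin.tail_cons]

end PairPotential

theorem statement17_general {d : ℕ} {β B : ℝ} (hβ : 0 ≤ β) {u : (Fin d → ℝ) → EReal}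
    (hu : IsPairPotential u) (hstab : IsStable u B) {Λ : Set (Fin d → ℝ)} (hΛ : volume Λ ≠ ⊤)
    (z : ℂ) (k : ℕ) (y : Fin k → Fin d → ℝ) (hθk : theta β u Λ k z y ≠ 0)
    (m : ℕ) (x : Fin (m + 1) → Fin d → ℝ) :
    Summable (fun l : ℕ =>
      ‖(1 / (Nat.factorial l : ℂ)) *
        ∫ w in cube Λ l,
          (∏ i, ((mayer β u (x 0 - w i) : ℝ) : ℂ)) *
            (theta β u Λ (m + k + l) z (Fin.append (Fin.append (Fin.tail x) y) w) /
              theta β u Λ k z y)‖) ∧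
    theta β u Λ (m + 1 + k) z (Fin.append x y) / theta β u Λ k z y =
      z * ((boltz β ((∑ i : Fin m, u (x 0 - Fin.tail x i)) +
          ∑ j : Fin k, u (x 0 - y j)) : ℝ) : ℂ) *
        ∑' l : ℕ, (1 / (Nat.factorial l : ℂ)) *
          ∫ w in cube Λ l,
            (∏ i, ((mayer β u (x 0 - w i) : ℝ) : ℂ)) *
              (theta β u Λ (m + k + l) z (Fin.append (Fin.append (Fin.tail x) y) w) /
                theta β u Λ k z y) := by
  have energy_eq : (∑ i, u (x 0 - Fin.tail x i)) + ∑ j, u (x 0 - y j) =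
      ∑ i, u (x 0 - Fin.append (Fin.tail x) y i) := by
    simp [Fin.sum_univ_add]
  simp only [← mul_div_assoc, integral_div, tsum_div_const]
  constructor
  · simpa only [norm_div] using
      (summable_norm_integral_mul_theta hβ hu hstab hΛ z (x 0) _).div_const _
  · rw [div_left_inj' hθk, theta_append_succ, theta_cons hβ hu hstab hΛ, energy_eq]

/-- Kirkwood–Salsburg-type recursion for the quotients
`θ_Λ^{(n+k)}(z;x,y)/θ_Λ^{(k)}(z;y)` (here `n = m + 1 ≥ 1`, `x₁ = x 0`,
`(x₂,…,xₙ) = Fin.tail x`, and `θ_Λ^{(0)} := 1` corresponds to `k = 0` via the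
empty tuple), with the series converging absolutely. -/
theorem statement17 {d : ℕ} (hd : 1 ≤ d) (β B : ℝ) (hβ : 0 < β) (hB : 0 ≤ B)
    (u : (Fin d → ℝ) → EReal) (hu : IsPairPotential u)
    (hstab : IsStable u B) (hreg : IsRegularPP β u)
    (Λ : Set (Fin d → ℝ)) (hΛb : IsBounded Λ) (hΛm : MeasurableSet Λ)
    (hXi : ∀ w : ℂ, ‖w‖ * (Real.exp (2 * β * B + 1) * Creg β u) < 1 →
      Xi β u Λ w ≠ 0)
    (z : ℂ) (hz : ‖z‖ * (Real.exp (2 * β * B + 1) * Creg β u) < 1)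
    (k : ℕ) (y : Fin k → (Fin d → ℝ)) (hy : ∀ j, y j ∈ Λ)
    (hθk : theta β u Λ k z y ≠ 0)
    (m : ℕ) (x : Fin (m + 1) → (Fin d → ℝ)) (hx : ∀ i, x i ∈ Λ) :
    Summable (fun l : ℕ =>
      ‖(1 / (Nat.factorial l : ℂ)) *
        ∫ w in cube Λ l,
          (∏ i, ((mayer β u (x 0 - w i) : ℝ) : ℂ)) *
            (theta β u Λ (m + k + l) z (Fin.append (Fin.append (Fin.tail x) y) w) /
              theta β u Λ k z y)‖) ∧
    theta β u Λ (m + 1 + k) z (Fin.append x y) / theta β u Λ k z y =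
      z * ((boltz β ((∑ i : Fin m, u (x 0 - Fin.tail x i)) +
          ∑ j : Fin k, u (x 0 - y j)) : ℝ) : ℂ) *
        ∑' l : ℕ, (1 / (Nat.factorial l : ℂ)) *
          ∫ w in cube Λ l,
            (∏ i, ((mayer β u (x 0 - w i) : ℝ) : ℂ)) *
              (theta β u Λ (m + k + l) z (Fin.append (Fin.append (Fin.tail x) y) w) /
                theta β u Λ k z y) :=
  statement17_general hβ.le hu hstab hΛb.measure_lt_top.ne z k y hθk m x
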